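/- Let H be a Hopf algebra over K. On the vector space H ⊗ H, the multiplication defined by (h¹ # h²)(h³ # h⁴) = ∑ h¹ h²₍₁₎ h³ S(h²₍₂₎) # h²₍₃₎ h⁴ is associative, and the map P_R(h # h') = ε(h') (h # 1_H) is an idempotent Rota-Baxter operator of weight -1 on this algebra. -/

import Mathlib

/-!
STATEMENT 16: For a Hopf algebra `H`, the smash product multiplication on `H ⊗ H`
arising from the adjoint action,
`(h¹ # h²)(h³ # h⁴) = ∑ h¹ h²₍₁₎ h³ S(h²₍₂₎) # h²₍₃₎ h⁴`,
is associative, and `P_R(h # h') = ε(h')(h # 1)` is an idempotent Rota-Baxter operator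
of weight `-1` on this algebra.
-/

open TensorProduct Coalgebra HopfAlgebra LinearMap

/-- The adjoint action of a Hopf algebra on itself, `x · h = ∑ x₍₁₎ h S(x₍₂₎)`,
as a linear map `H ⊗ H →ₗ H`. -/
noncomputable def adjointAction (K : Type*) [Field K]
    (H : Type*) [Ring H] [HopfAlgebra K H] :
    H ⊗[K] H →ₗ[K] H :=
  (LinearMap.mul' K H) ∘ₗ
  (LinearMap.lTensor H (LinearMap.mul' K H)) ∘ₗ
  (LinearMap.lTensor H (LinearMap.lTensor H (antipode (R := K) (A := H)))) ∘ₗ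
  (LinearMap.lTensor H (TensorProduct.comm K H H).toLinearMap) ∘ₗ
  (TensorProduct.assoc K H H H).toLinearMap ∘ₗ
  (LinearMap.rTensor H (Coalgebra.comul (R := K) (A := H)))

/-- The smash product multiplication on `H ⊗ H` arising from the adjoint action:
`(h¹ # h²)(h³ # h⁴) = ∑ h¹ h²₍₁₎ h³ S(h²₍₂₎) # h²₍₃₎ h⁴`. -/
noncomputable def adSmashMul (K : Type*) [Field K]
    (H : Type*) [Ring H] [HopfAlgebra K H] :
    (H ⊗[K] H) ⊗[K] (H ⊗[K] H) →ₗ[K] H ⊗[K] H :=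
  (LinearMap.rTensor H (LinearMap.mul' K H)) ∘ₗ
  (TensorProduct.assoc K H H H).symm.toLinearMap ∘ₗ
  (LinearMap.lTensor H (TensorProduct.map (adjointAction K H) (LinearMap.mul' K H))) ∘ₗ
  (LinearMap.lTensor H (TensorProduct.tensorTensorTensorComm K H H H H).toLinearMap) ∘ₗ
  (TensorProduct.assoc K H (H ⊗[K] H) (H ⊗[K] H)).toLinearMap ∘ₗ
  (LinearMap.rTensor (H ⊗[K] H) (LinearMap.lTensor H (Coalgebra.comul (R := K) (A := H))))

namespace AdSmashAux

variable {K : Type*} [Field K] {H : Type*} [Ring H] [HopfAlgebra K H]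

theorem lin_comul_ext {M : Type*} [AddCommGroup M] [Module K M]
    (f : H ⊗[K] (H ⊗[K] H) →ₗ[K] M) (y : H) :
    f (TensorProduct.assoc K H H H (LinearMap.rTensor H (comul (R := K)) (comul (R := K) y)))
      = f (LinearMap.lTensor H (comul (R := K)) (comul (R := K) y)) := by
  rw [Coalgebra.coassoc_apply]

/-- The map `x ⊗ y ↦ (f x ⊗ 1) t(y)`. -/
noncomputable def T (f : H →ₗ[K] H) (g : H ⊗[K] H →ₗ[K] H ⊗[K] H) :
    H ⊗[K] (H ⊗[K] H) →ₗ[K] H ⊗[K] H :=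
  TensorProduct.lift (((LinearMap.mul K (H ⊗[K] H)) ∘ₗ
    (TensorProduct.mk K H H).flip 1 ∘ₗ f).compl₂ g)

@[simp] theorem T_tmul (f : H →ₗ[K] H) (g : H ⊗[K] H →ₗ[K] H ⊗[K] H) (x : H) (t : H ⊗[K] H) :
    T f g (x ⊗ₜ t) = (f x ⊗ₜ[K] (1 : H)) * g t := by
  simp [T]

theorem T_S (y : H) :
    T (antipode K (A := H)) LinearMap.id (LinearMap.lTensor H (comul (R := K)) (comul (R := K) y))
      = 1 ⊗ₜ[K] y := by
  rw [← lin_comul_ext]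
  have h : ∀ t : H ⊗[K] H, T (antipode K (A := H)) LinearMap.id
      (TensorProduct.assoc K H H H (LinearMap.rTensor H (comul (R := K)) t)) =
      LinearMap.rTensor H (LinearMap.mul' K H ∘ₗ LinearMap.rTensor H (antipode K (A := H)) ∘ₗ
        comul (R := K)) t := by
    intro t
    induction t with
    | zero => simp
    | add a b ha hb => simp only [map_add, ha, hb]
    | tmul a b =>
      simp only [LinearMap.rTensor_tmul, LinearMap.comp_apply]
      generalize (comul (R := K) a : H ⊗[K] H) = u
      induction u with
      | zero => simp
      | add a b ha hb => simp only [map_add, TensorProduct.add_tmul, ha, hb]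
      | tmul p q => simp
  rw [h, HopfAlgebra.mul_antipode_rTensor_comul, LinearMap.rTensor_comp_apply]
  rw [Coalgebra.rTensor_counit_comul]
  simp

theorem T_id (y : H) :
    T LinearMap.id (LinearMap.rTensor H (antipode K (A := H)))
      (LinearMap.lTensor H (comul (R := K)) (comul (R := K) y))
      = 1 ⊗ₜ[K] y := by
  rw [← lin_comul_ext]
  have h : ∀ t : H ⊗[K] H, T LinearMap.id (LinearMap.rTensor H (antipode K (A := H)))
      (TensorProduct.assoc K H H H (LinearMap.rTensor H (comul (R := K)) t)) =
      LinearMap.rTensor H (LinearMap.mul' K H ∘ₗ LinearMap.lTensor H (antipode K (A := H)) ∘ₗ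
        comul (R := K)) t := by
    intro t
    induction t with
    | zero => simp
    | add a b ha hb => simp only [map_add, ha, hb]
    | tmul a b =>
      simp only [LinearMap.rTensor_tmul, LinearMap.comp_apply]
      generalize (comul (R := K) a : H ⊗[K] H) = u
      induction u with
      | zero => simp
      | add a b ha hb => simp only [map_add, TensorProduct.add_tmul, ha, hb]
      | tmul p q => simp
  rw [h, HopfAlgebra.mul_antipode_lTensor_comul, LinearMap.rTensor_comp_apply]
  rw [Coalgebra.rTensor_counit_comul]
  simp

/-- `φ (h ⊗ x) = (h ⊗ 1) Δ(x)`. -/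
noncomputable def φ : H ⊗[K] H →ₗ[K] H ⊗[K] H :=
  T LinearMap.id LinearMap.id ∘ₗ LinearMap.lTensor H (comul (R := K))

@[simp] theorem φ_tmul (h x : H) :
    φ (h ⊗ₜ[K] x) = (h ⊗ₜ[K] (1 : H)) * comul (R := K) x := by
  simp [φ]

/-- `ψ (h ⊗ x) = ∑ h S(x₁) ⊗ x₂`. -/
noncomputable def ψ : H ⊗[K] H →ₗ[K] H ⊗[K] H :=
  T LinearMap.id (LinearMap.rTensor H (antipode K (A := H))) ∘ₗ
    LinearMap.lTensor H (comul (R := K))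

theorem ψ_mul (h : H) (t : H ⊗[K] H) :
    ψ ((h ⊗ₜ[K] (1 : H)) * t) = (h ⊗ₜ[K] (1 : H)) * ψ t := by
  induction t with
  | zero => simp
  | add a b ha hb => simp only [map_add, mul_add, ha, hb]
  | tmul p q => simp [ψ, ← mul_assoc]

theorem ψφ (t : H ⊗[K] H) : ψ (φ t) = t := by
  induction t with
  | zero => simp
  | add a b ha hb => simp only [map_add, ha, hb]
  | tmul p q =>
    rw [φ_tmul, ψ_mul]
    have := T_id (K := K) q
    simp only [ψ, LinearMap.comp_apply]
    rw [this]; simp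

theorem φ_inj : Function.Injective (φ : H ⊗[K] H →ₗ[K] H ⊗[K] H) :=
  Function.LeftInverse.injective ψφ

theorem φ_mul (h : H) (t : H ⊗[K] H) :
    φ ((h ⊗ₜ[K] (1 : H)) * t) = (h ⊗ₜ[K] (1 : H)) * φ t := by
  induction t with
  | zero => simp
  | add a b ha hb => simp only [map_add, mul_add, ha, hb]
  | tmul p q => simp [← mul_assoc]

theorem φ_mul_right (t : H ⊗[K] H) (d : H) :
    φ (t * ((1 : H) ⊗ₜ[K] d)) = φ t * comul (R := K) d := by
  induction t with
  | zero => simp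
  | add a b ha hb => simp only [map_add, add_mul, ha, hb]
  | tmul p q => simp [mul_assoc, Bialgebra.comul_mul]

/-- `b ↦ ad(b, c)`. -/
noncomputable def ad (c : H) : H →ₗ[K] H :=
  adjointAction K H ∘ₗ (TensorProduct.mk K H H).flip c

theorem adSmashMul_tmul (a b c d : H) :
    adSmashMul K H ((a ⊗ₜ[K] b) ⊗ₜ[K] (c ⊗ₜ[K] d)) =
      (a ⊗ₜ[K] (1 : H)) * LinearMap.rTensor H (ad (K := K) c) (comul (R := K) b)
        * ((1 : H) ⊗ₜ[K] d) := by
  simp only [adSmashMul, LinearMap.comp_apply, LinearMap.rTensor_tmul, LinearMap.lTensor_tmul]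
  generalize (comul (R := K) b : H ⊗[K] H) = u
  induction u with
  | zero => simp
  | add p q hp hq =>
    simp only [map_add, TensorProduct.add_tmul, TensorProduct.tmul_add, mul_add, add_mul, hp, hq]
  | tmul p q => simp [ad]

theorem key (b c : H) :
    φ (LinearMap.rTensor H (ad (K := K) c) (comul (R := K) b)) =
      comul (R := K) b * (c ⊗ₜ[K] (1 : H)) := by
  have h : ∀ t : H ⊗[K] H, φ (LinearMap.rTensor H (ad (K := K) c) t) =
      T (LinearMap.mulRight K c) (T (antipode K (A := H)) LinearMap.id ∘ₗ
        LinearMap.lTensor H (comul (R := K)))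
        (TensorProduct.assoc K H H H (LinearMap.rTensor H (comul (R := K)) t)) := by
    intro t
    induction t with
    | zero => simp
    | add a b ha hb => simp only [map_add, ha, hb]
    | tmul p q =>
      simp only [LinearMap.rTensor_tmul, φ_tmul, ad, adjointAction, LinearMap.comp_apply,
        LinearMap.flip_apply, TensorProduct.mk_apply]
      generalize (comul (R := K) p : H ⊗[K] H) = u
      induction u with
      | zero => simp
      | add a b ha hb =>
        simp only [map_add, TensorProduct.add_tmul, TensorProduct.tmul_add, add_mul, ha, hb]
      | tmul p q => simp [← mul_assoc]
  rw [h, lin_comul_ext]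
  generalize (comul (R := K) b : H ⊗[K] H) = u
  induction u with
  | zero => simp
  | add a b ha hb => simp only [map_add, add_mul, ha, hb]
  | tmul p q => simp [T_S]

theorem φ_adSmashMul (x y : H ⊗[K] H) :
    φ (adSmashMul K H (x ⊗ₜ[K] y)) = φ x * φ y := by
  induction x with
  | zero => simp
  | add a b ha hb => simp only [map_add, TensorProduct.add_tmul, add_mul, ha, hb]
  | tmul a b =>
    induction y with
    | zero => simp
    | add a b ha hb => simp only [map_add, TensorProduct.tmul_add, mul_add, ha, hb]
    | tmul c d =>
      rw [adSmashMul_tmul, φ_mul_right, φ_mul, key]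
      simp [mul_assoc]

theorem ad_one (c : H) : ad (K := K) c 1 = c := by
  simp [ad, adjointAction, Bialgebra.comul_one, Algebra.TensorProduct.one_def]

/-- The projection. -/
noncomputable abbrev PR : H ⊗[K] H →ₗ[K] H ⊗[K] H :=
  LinearMap.lTensor H ((Algebra.linearMap K H) ∘ₗ (Coalgebra.counit (R := K) (A := H)))

theorem PR_tmul (a b : H) : PR (a ⊗ₜ[K] b) = counit (R := K) b • (a ⊗ₜ[K] (1 : H)) := by
  simp [PR, Algebra.algebraMap_eq_smul_one]

theorem PR_mul (a d : H) (t : H ⊗[K] H) :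
    PR ((a ⊗ₜ[K] (1 : H)) * t * ((1 : H) ⊗ₜ[K] d)) =
      counit (R := K) d • ((a ⊗ₜ[K] (1 : H)) * PR t) := by
  induction t with
  | zero => simp
  | add p q hp hq => simp only [map_add, mul_add, add_mul, hp, hq, smul_add]
  | tmul p q =>
    simp only [Algebra.TensorProduct.tmul_mul_tmul, PR_tmul, mul_one, one_mul,
      Bialgebra.counit_mul, mul_smul_comm, smul_smul]
    rw [mul_comm]

theorem PR_smash (a b c d : H) :
    PR (adSmashMul K H ((a ⊗ₜ[K] b) ⊗ₜ[K] (c ⊗ₜ[K] d))) =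
      counit (R := K) d • ((a * ad (K := K) c b) ⊗ₜ[K] (1 : H)) := by
  rw [adSmashMul_tmul, PR_mul]
  have : PR (LinearMap.rTensor H (ad (K := K) c) (comul (R := K) b)) =
      LinearMap.rTensor H (ad (K := K) c) (LinearMap.lTensor H (Algebra.linearMap K H)
        (LinearMap.lTensor H (counit (R := K)) (comul (R := K) b))) := by
    generalize (comul (R := K) b : H ⊗[K] H) = u
    induction u with
    | zero => simp
    | add p q hp hq => simp only [map_add, hp, hq]
    | tmul p q => simp
  rw [this, Coalgebra.lTensor_counit_comul]
  simp

end AdSmashAux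

theorem adjoint_smashProduct_assoc_and_PR_RotaBaxter
    (K : Type*) [Field K] [CharZero K]
    (H : Type*) [Ring H] [HopfAlgebra K H] :
    -- associativity of the smash multiplication
    (∀ x y z : H ⊗[K] H,
      adSmashMul K H (adSmashMul K H (x ⊗ₜ[K] y) ⊗ₜ[K] z) =
        adSmashMul K H (x ⊗ₜ[K] adSmashMul K H (y ⊗ₜ[K] z))) ∧
    -- P_R(h # h') = ε(h')(h # 1) is an idempotent Rota-Baxter operator of weight -1
    (let PR : H ⊗[K] H →ₗ[K] H ⊗[K] H :=
      LinearMap.lTensor H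
        ((Algebra.linearMap K H) ∘ₗ (Coalgebra.counit (R := K) (A := H)))
    (PR ∘ₗ PR = PR) ∧
    (∀ x y : H ⊗[K] H,
      adSmashMul K H (PR x ⊗ₜ[K] PR y) =
        PR (adSmashMul K H (x ⊗ₜ[K] PR y)) +
        PR (adSmashMul K H (PR x ⊗ₜ[K] y)) +
        (-1 : K) • PR (adSmashMul K H (x ⊗ₜ[K] y)))) := by
  refine ⟨fun x y z => AdSmashAux.φ_inj ?_, ?_⟩
  · simp only [AdSmashAux.φ_adSmashMul, mul_assoc]
  · intro PR
    have hPR : PR = AdSmashAux.PR := rfl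
    clear_value PR
    subst hPR
    constructor
    · ext a b
      simp
    · intro x y
      induction x with
      | zero => simp
      | add p q hp hq =>
        simp only [map_add, TensorProduct.add_tmul, hp, hq, smul_add]; abel
      | tmul a b =>
        induction y with
        | zero => simp
        | add p q hp hq =>
          simp only [map_add, TensorProduct.tmul_add, hp, hq, smul_add]; abel
        | tmul c d =>
          rw [AdSmashAux.PR_tmul, AdSmashAux.PR_tmul]
          simp only [TensorProduct.smul_tmul', TensorProduct.tmul_smul, map_smul]
          simp only [← TensorProduct.smul_tmul', TensorProduct.tmul_smul, map_smul]
          rw [AdSmashAux.PR_smash, AdSmashAux.PR_smash, AdSmashAux.PR_smash,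
            AdSmashAux.adSmashMul_tmul, AdSmashAux.ad_one]
          simp [Bialgebra.comul_one, Algebra.TensorProduct.one_def, AdSmashAux.ad_one]
          try simp only [smul_smul, mul_comm]
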